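/- arXiv:2108.05416 — 3 statements merged into one kernel-verified Lean document; each statement's English description precedes it below -/
import Mathlib

section
/- Let n ≥ 1 and s ∈ (0,1). Let Ω ⊂ ℝⁿ be a nonempty open bounded convex set, let u ∈ L¹(ℝⁿ) satisfy u ≥ 0 almost everywhere, u = 0 almost everywhere outside Ω, and u not almost everywhere equal to 0. Let x₀ ∈ ∂Ω and let ν be a unit vector with ⟨ξ - x₀, ν⟩ ≤ 0 for every ξ ∈ Ω. Then for every y > 0 the map x ↦ w_u(x,y) is differentiable at x₀, its directional derivative in the direction ν equals (n+2s) ∫_{ℝⁿ} y^{2s} ⟨ξ - x₀, ν⟩ u(ξ) (|x₀-ξ|² + y²)^{-(n+2s+2)/2} dξ, and in particular this directional derivative is strictly negative. -/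
open MeasureTheory Real Filter
open scoped RealInnerProductSpace ENNReal

/-!
The `x`-gradient of the kernel `(‖x - ξ‖ ^ 2 + y ^ 2) ^ (-p / 2)` is `p` times the kernel of
exponent `p + 2` times `ξ - x`. For `y ≠ 0` the kernel and its gradient are bounded in `ξ`,
uniformly in `x`, so integrability of `u` alone justifies differentiating under the integral sign.
The resulting integrand has the sign of `⟪ξ - x₀, ν⟫ * u ξ`, and an open set on one side of
a hyperplane through `x₀` does not meet that hyperplane, so the integrand is strictly negative
wherever `u ≠ 0`.
-/

section SupportingHyperplane

variable {E : Type*} [NormedAddCommGroup E] [InnerProductSpace ℝ E]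

lemma inner_sub_neg_of_isOpen_of_forall_nonpos {Ω : Set E} (hΩ : IsOpen Ω) {x₀ ν : E}
    (hν : ν ≠ 0) (hsupp : ∀ ξ ∈ Ω, ⟪ξ - x₀, ν⟫ ≤ 0) {ξ : E} (hξ : ξ ∈ Ω) :
    ⟪ξ - x₀, ν⟫ < 0 := by
  have hopen : IsOpenMap (innerSL ℝ ν) :=
    (innerSL ℝ ν).isOpenMap_of_ne_zero fun h => hν (inner_self_eq_zero.1 congr($h ν))
  have himage : innerSL ℝ ν '' Ω ⊆ Set.Iic ⟪ν, x₀⟫ := by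
    rintro _ ⟨η, hη, rfl⟩
    simpa [inner_sub_left, real_inner_comm] using hsupp η hη
  have hlt : innerSL ℝ ν ξ ∈ Set.Iio ⟪ν, x₀⟫ :=
    interior_Iic (a := ⟪ν, x₀⟫) ▸
      interior_maximal himage (hopen Ω hΩ) (Set.mem_image_of_mem _ hξ)
  simpa [inner_sub_left, real_inner_comm] using hlt

end SupportingHyperplane

section SignOfIntegral

variable {α : Type*} [MeasurableSpace α] {μ : Measure α}

lemma integral_mul_neg_of_ae_neg {u g : α → ℝ} (hint : Integrable (fun ξ => u ξ * g ξ) μ)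
    (hu : ∀ᵐ ξ ∂μ, 0 ≤ u ξ) (hg : ∀ᵐ ξ ∂μ, u ξ ≠ 0 → g ξ < 0) (hne : ¬ u =ᵐ[μ] 0) :
    ∫ ξ, u ξ * g ξ ∂μ < 0 := by
  have hnonpos : ∀ᵐ ξ ∂μ, u ξ * g ξ ≤ 0 := by
    filter_upwards [hu, hg] with ξ hu hg
    rcases eq_or_ne (u ξ) 0 with h | h
    · simp [h]
    · exact mul_nonpos_of_nonneg_of_nonpos hu (hg h).le
  refine (integral_nonpos_of_ae hnonpos).lt_of_ne fun h => hne ?_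
  have hzero : (fun ξ => -(u ξ * g ξ)) =ᵐ[μ] 0 :=
    (integral_eq_zero_iff_of_nonneg_ae (hnonpos.mono fun ξ => neg_nonneg.2) hint.neg).1
      (by rw [integral_neg, h, neg_zero])
  filter_upwards [hzero, hg] with ξ hξ hg
  by_contra hu
  exact mul_ne_zero hu (hg hu).ne (neg_eq_zero.1 hξ)

end SignOfIntegral

section IntegralTranslate

variable {𝕜 E F : Type*} [RCLike 𝕜] [NormedAddCommGroup E] [SecondCountableTopology E]
  [MeasurableSpace E] [OpensMeasurableSpace E] [NormedAddCommGroup F] [NormedSpace 𝕜 F]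
  {μ : Measure E} {u : E → 𝕜} {K : E → F} {C : ℝ}

lemma integrable_smul_comp_sub (hu : Integrable u μ) (hK : Continuous K)
    (hC : ∀ z, ‖K z‖ ≤ C) (x : E) : Integrable (fun ξ => u ξ • K (x - ξ)) μ :=
  hu.smul_bdd C (hK.comp (continuous_const.sub continuous_id)).aestronglyMeasurable
    (ae_of_all _ fun ξ => hC (x - ξ))

lemma hasFDerivAt_integral_smul_comp_sub [NormedSpace 𝕜 E] [NormedSpace ℝ F]
    {K' : E → E →L[𝕜] F} {C' : ℝ} (hu : Integrable u μ) (hK : ∀ z, HasFDerivAt K (K' z) z)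
    (hK' : Continuous K') (hC : ∀ z, ‖K z‖ ≤ C) (hC' : ∀ z, ‖K' z‖ ≤ C') (x : E) :
    HasFDerivAt (fun x => ∫ ξ, u ξ • K (x - ξ) ∂μ) (∫ ξ, u ξ • K' (x - ξ) ∂μ) x := by
  have hcont : Continuous K := continuous_iff_continuousAt.2 fun z => (hK z).continuousAt
  have hint (x : E) := integrable_smul_comp_sub hu hcont hC x
  refine hasFDerivAt_integral_of_dominated_of_fderiv_le (s := Set.univ)
    (F' := fun x ξ => u ξ • K' (x - ξ)) (bound := fun ξ => ‖u ξ‖ * C') univ_mem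
    (Eventually.of_forall fun x => (hint x).aestronglyMeasurable) (hint x)
    (integrable_smul_comp_sub hu hK' hC' x).aestronglyMeasurable
    (ae_of_all _ fun ξ x _ => ?_) (hu.norm.mul_const C') (ae_of_all _ fun ξ x _ => ?_)
  · rw [norm_smul]
    gcongr
    exact hC' (x - ξ)
  · exact ((hasFDerivAt_comp_sub ξ).2 (hK (x - ξ))).const_smul (u ξ)

end IntegralTranslate

section RieszKernel

/-- The Riesz kernel `‖(z, y)‖ ^ (-p)` of `E × ℝ` with its Euclidean norm, as a function of
`z` at height `y`. It is the kernel of the Caffarelli–Silvestre extension up to a power of `y`. -/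
noncomputable def rieszKernel {E : Type*} [Norm E] (p y : ℝ) (z : E) : ℝ :=
  (‖z‖ ^ 2 + y ^ 2) ^ (-p / 2)

variable {E : Type*} [NormedAddCommGroup E] {p y : ℝ}

lemma rieszKernel_pos (hy : y ≠ 0) (z : E) : 0 < rieszKernel p y z :=
  rpow_pos_of_pos (by positivity) _

lemma continuous_rieszKernel (hy : y ≠ 0) : Continuous (rieszKernel p y : E → ℝ) :=
  Continuous.rpow_const (by fun_prop) fun z => Or.inl (by positivity)

lemma rieszKernel_le_rieszKernel_zero (hp : 0 ≤ p) (hy : y ≠ 0) (z : E) :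
    rieszKernel p y z ≤ rieszKernel p y (0 : E) :=
  rpow_le_rpow_of_nonpos (by positivity) (by gcongr; simp) (by linarith)

lemma norm_mul_rieszKernel_add_one_le (hy : y ≠ 0) (z : E) :
    ‖z‖ * rieszKernel (p + 1) y z ≤ rieszKernel p y z := by
  have hQ : 0 < ‖z‖ ^ 2 + y ^ 2 := by positivity
  calc ‖z‖ * rieszKernel (p + 1) y z
      ≤ (‖z‖ ^ 2 + y ^ 2) ^ (1 / 2 : ℝ) * rieszKernel (p + 1) y z := by
        gcongr
        · exact (rieszKernel_pos hy z).le
        · rw [← sqrt_eq_rpow]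
          exact le_sqrt_of_sq_le (le_add_of_nonneg_right (sq_nonneg y))
    _ = rieszKernel p y z := by
        rw [rieszKernel, rieszKernel, ← rpow_add hQ]
        ring_nf

variable [InnerProductSpace ℝ E]

lemma continuous_innerSL_rieszKernel_smul (hy : y ≠ 0) :
    Continuous fun z : E => innerSL ℝ (rieszKernel p y z • z) :=
  (innerSL ℝ).continuous.comp ((continuous_rieszKernel hy).smul continuous_id)

lemma norm_innerSL_rieszKernel_add_two_smul_le (hp : 0 ≤ p) (hy : y ≠ 0) (z : E) :
    ‖innerSL ℝ (rieszKernel (p + 2) y z • z)‖ ≤ rieszKernel (p + 1) y (0 : E) := by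
  calc ‖innerSL ℝ (rieszKernel (p + 2) y z • z)‖
      = ‖z‖ * rieszKernel (p + 1 + 1) y z := by
        rw [innerSL_apply_norm, norm_smul, norm_of_nonneg (rieszKernel_pos hy z).le, mul_comm,
          add_assoc, one_add_one_eq_two]
    _ ≤ rieszKernel (p + 1) y z := norm_mul_rieszKernel_add_one_le hy z
    _ ≤ rieszKernel (p + 1) y (0 : E) := rieszKernel_le_rieszKernel_zero (by positivity) hy z

lemma mul_smul_innerSL_rieszKernel_smul_sub_apply (b c : ℝ) (x ξ v : E) :
    ((b * c) • innerSL ℝ (rieszKernel p y (x - ξ) • (x - ξ))) v =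
      -(b * ⟪ξ - x, v⟫ * c * rieszKernel p y (x - ξ)) := by
  rw [smul_apply, innerSL_apply_apply, smul_eq_mul, real_inner_smul_left,
    ← inner_neg_neg, neg_sub, inner_neg_right]
  ring

lemma hasFDerivAt_rieszKernel (hy : y ≠ 0) (z : E) :
    HasFDerivAt (rieszKernel p y) (-p • innerSL ℝ (rieszKernel (p + 2) y z • z)) z := by
  have hQ : ‖z‖ ^ 2 + y ^ 2 ≠ 0 := by positivity
  have hexp : -p / 2 - 1 = -(p + 2) / 2 := by ring
  refine (((hasFDerivAt_id z).norm_sq.add_const (y ^ 2)).rpow_const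
    (p := -p / 2) (Or.inl hQ)).congr_fderiv ?_
  ext v
  simp [rieszKernel, hexp]
  ring

end RieszKernel

section CaffarelliSilvestreExtension

variable {E : Type*} [NormedAddCommGroup E] [MeasurableSpace E]

/-- The extension `w_u(x, y) = ∫ y ^ a u(ξ) (‖x - ξ‖² + y²) ^ (-p / 2) dμ(ξ)` of `u` to the upper
half-space. The Caffarelli–Silvestre extension of order `s` on `ℝⁿ` is the case `a = 2s`,
`p = n + 2s`, with `μ` the Lebesgue measure and no normalizing constant. -/
noncomputable def caffarelliSilvestreExtension (μ : Measure E) (a p : ℝ) (u : E → ℝ) (x : E)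
    (y : ℝ) : ℝ :=
  ∫ ξ, y ^ a * u ξ * rieszKernel p y (x - ξ) ∂μ

variable [InnerProductSpace ℝ E] [SecondCountableTopology E] [OpensMeasurableSpace E]
  {μ : Measure E} {a p y : ℝ} {u : E → ℝ}

lemma integrable_smul_innerSL_rieszKernel_add_two (hp : 0 ≤ p) (hy : y ≠ 0)
    (hu : Integrable u μ) (x : E) :
    Integrable (fun ξ => (y ^ a * u ξ) •
      innerSL ℝ (rieszKernel (p + 2) y (x - ξ) • (x - ξ))) μ :=
  integrable_smul_comp_sub (hu.const_mul (y ^ a)) (continuous_innerSL_rieszKernel_smul hy)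
    (norm_innerSL_rieszKernel_add_two_smul_le hp hy) x

lemma integrable_inner_mul_rieszKernel_add_two (hp : 0 ≤ p) (hy : y ≠ 0) (hu : Integrable u μ)
    (x v : E) :
    Integrable (fun ξ => y ^ a * ⟪ξ - x, v⟫ * u ξ * rieszKernel (p + 2) y (x - ξ)) μ := by
  have hint := (integrable_smul_innerSL_rieszKernel_add_two (a := a) hp hy hu
    x).apply_continuousLinearMap v
  simp_rw [mul_smul_innerSL_rieszKernel_smul_sub_apply] at hint
  exact integrable_neg_iff.1 hint

lemma hasFDerivAt_caffarelliSilvestreExtension (hp : 0 ≤ p) (hy : y ≠ 0) (hu : Integrable u μ)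
    (x : E) :
    HasFDerivAt (caffarelliSilvestreExtension μ a p u · y)
      (-p • ∫ ξ, (y ^ a * u ξ) • innerSL ℝ (rieszKernel (p + 2) y (x - ξ) • (x - ξ)) ∂μ) x := by
  simp_rw [← integral_smul, smul_comm (-p)]
  refine hasFDerivAt_integral_smul_comp_sub (C := rieszKernel p y (0 : E))
    (C' := p * rieszKernel (p + 1) y (0 : E)) (hu.const_mul (y ^ a)) (hasFDerivAt_rieszKernel hy)
    ((continuous_innerSL_rieszKernel_smul hy).const_smul (-p)) (fun z => ?_) (fun z => ?_) x
  · rw [norm_of_nonneg (rieszKernel_pos hy z).le]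
    exact rieszKernel_le_rieszKernel_zero hp hy z
  · rw [norm_smul, norm_neg, norm_of_nonneg hp]
    gcongr
    exact norm_innerSL_rieszKernel_add_two_smul_le hp hy z

lemma fderiv_caffarelliSilvestreExtension_apply (hp : 0 ≤ p) (hy : y ≠ 0)
    (hu : Integrable u μ) (x v : E) :
    fderiv ℝ (caffarelliSilvestreExtension μ a p u · y) x v =
      p * ∫ ξ, y ^ a * ⟪ξ - x, v⟫ * u ξ * rieszKernel (p + 2) y (x - ξ) ∂μ := by
  rw [(hasFDerivAt_caffarelliSilvestreExtension hp hy hu x).fderiv, smul_apply,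
    ContinuousLinearMap.integral_apply (integrable_smul_innerSL_rieszKernel_add_two hp hy hu x)]
  simp_rw [mul_smul_innerSL_rieszKernel_smul_sub_apply]
  rw [integral_neg, smul_neg, neg_smul, neg_neg, smul_eq_mul]

lemma integral_inner_mul_rieszKernel_neg (hp : 0 ≤ p) (hy : 0 < y) (hu : Integrable u μ)
    (hpos : ∀ᵐ ξ ∂μ, 0 ≤ u ξ) (hne : ¬ u =ᵐ[μ] 0) {x ν : E}
    (hsupp : ∀ᵐ ξ ∂μ, u ξ ≠ 0 → ⟪ξ - x, ν⟫ < 0) :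
    ∫ ξ, y ^ a * ⟪ξ - x, ν⟫ * u ξ * rieszKernel (p + 2) y (x - ξ) ∂μ < 0 := by
  have hfactor (ξ : E) : y ^ a * ⟪ξ - x, ν⟫ * u ξ * rieszKernel (p + 2) y (x - ξ) =
      u ξ * (y ^ a * rieszKernel (p + 2) y (x - ξ) * ⟪ξ - x, ν⟫) := by ring
  have hint := integrable_inner_mul_rieszKernel_add_two (a := a) hp hy.ne' hu x ν
  simp_rw [hfactor] at hint ⊢
  refine integral_mul_neg_of_ae_neg hint hpos (hsupp.mono fun ξ h hξ => ?_) hne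
  exact mul_neg_of_pos_of_neg
    (mul_pos (rpow_pos_of_pos hy a) (rieszKernel_pos hy.ne' (x - ξ))) (h hξ)

theorem stmt5_general (hp : 0 < p) (hu : Integrable u μ) (hpos : ∀ᵐ ξ ∂μ, 0 ≤ u ξ)
    (hne : ¬ u =ᵐ[μ] 0) {x₀ ν : E} (hsupp : ∀ᵐ ξ ∂μ, u ξ ≠ 0 → ⟪ξ - x₀, ν⟫ < 0) (hy : 0 < y) :
    DifferentiableAt ℝ (caffarelliSilvestreExtension μ a p u · y) x₀ ∧
    fderiv ℝ (caffarelliSilvestreExtension μ a p u · y) x₀ ν =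
      p * ∫ ξ, y ^ a * ⟪ξ - x₀, ν⟫ * u ξ * rieszKernel (p + 2) y (x₀ - ξ) ∂μ ∧
    fderiv ℝ (caffarelliSilvestreExtension μ a p u · y) x₀ ν < 0 := by
  have hformula := fderiv_caffarelliSilvestreExtension_apply (a := a) hp.le hy.ne' hu x₀ ν
  refine ⟨(hasFDerivAt_caffarelliSilvestreExtension hp.le hy.ne' hu x₀).differentiableAt,
    hformula, ?_⟩
  rw [hformula]
  exact mul_neg_of_pos_of_neg hp
    (integral_inner_mul_rieszKernel_neg hp.le hy hu hpos hne hsupp)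

end CaffarelliSilvestreExtension

/-- For a bounded open convex `Ω`, a nonnegative nontrivial `u ∈ L¹` vanishing a.e. outside
`Ω`, a boundary point `x₀ ∈ ∂Ω` and an outer unit normal `ν` of a supporting hyperplane of
`Ω` at `x₀`, for every `y > 0` the map `x ↦ w_u(x,y)` is differentiable at `x₀`, its
directional derivative in direction `ν` equals
`(n+2s) ∫ y^{2s} ⟨ξ-x₀, ν⟩ u(ξ)(|x₀-ξ|²+y²)^{-(n+2s+2)/2} dξ`, and this derivative is
strictly negative. -/
theorem stmt5 {n : ℕ} (hn : 1 ≤ n) (s : ℝ) (hs : s ∈ Set.Ioo (0 : ℝ) 1)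
    (Ω : Set (EuclideanSpace ℝ (Fin n))) (hΩopen : IsOpen Ω) (hΩne : Ω.Nonempty)
    (hΩbdd : Bornology.IsBounded Ω) (hΩconv : Convex ℝ Ω)
    (u : EuclideanSpace ℝ (Fin n) → ℝ) (hu : Integrable u)
    (hpos : ∀ᵐ ξ, 0 ≤ u ξ) (hzero : ∀ᵐ ξ, ξ ∉ Ω → u ξ = 0)
    (hne : ¬ (u =ᵐ[volume] 0))
    (x₀ : EuclideanSpace ℝ (Fin n)) (hx₀ : x₀ ∈ frontier Ω)
    (ν : EuclideanSpace ℝ (Fin n)) (hν : ‖ν‖ = 1)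
    (hsupp : ∀ ξ ∈ Ω, ⟪ξ - x₀, ν⟫ ≤ 0)
    (y : ℝ) (hy : 0 < y) :
    DifferentiableAt ℝ
      (fun x : EuclideanSpace ℝ (Fin n) =>
        ∫ ξ : EuclideanSpace ℝ (Fin n),
          y ^ (2 * s) * u ξ * (‖x - ξ‖ ^ 2 + y ^ 2) ^ (-((n : ℝ) + 2 * s) / 2)) x₀ ∧
    fderiv ℝ
      (fun x : EuclideanSpace ℝ (Fin n) =>
        ∫ ξ : EuclideanSpace ℝ (Fin n),
          y ^ (2 * s) * u ξ * (‖x - ξ‖ ^ 2 + y ^ 2) ^ (-((n : ℝ) + 2 * s) / 2)) x₀ ν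
      = ((n : ℝ) + 2 * s) *
        ∫ ξ : EuclideanSpace ℝ (Fin n),
          y ^ (2 * s) * ⟪ξ - x₀, ν⟫ * u ξ *
            (‖x₀ - ξ‖ ^ 2 + y ^ 2) ^ (-((n : ℝ) + 2 * s + 2) / 2) ∧
    fderiv ℝ
      (fun x : EuclideanSpace ℝ (Fin n) =>
        ∫ ξ : EuclideanSpace ℝ (Fin n),
          y ^ (2 * s) * u ξ * (‖x - ξ‖ ^ 2 + y ^ 2) ^ (-((n : ℝ) + 2 * s) / 2)) x₀ ν < 0 := by
  exact stmt5_general (by have := hs.1; positivity) hu hpos hne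
    (hzero.mono fun ξ h hξ => inner_sub_neg_of_isOpen_of_forall_nonpos hΩopen
      (norm_ne_zero_iff.1 (hν ▸ one_ne_zero)) hsupp (not_imp_comm.1 h hξ)) hy
end

section
/- Let n ≥ 1 and s ∈ (0,1). Define P(x,y) = y^{2s} (|x|² + y²)^{-(n+2s)/2} for x ∈ ℝⁿ, y > 0. Then for every x ∈ ℝⁿ and y > 0, y·Δ_x P(x,y) + (1-2s)·∂_y P(x,y) + y·∂²_{yy} P(x,y) = 0; equivalently, div(y^{1-2s} ∇P) = 0 on ℝⁿ × (0,∞), where ∇ is the full gradient in (x,y). -/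
open MeasureTheory Real Filter
open scoped ENNReal

/-!
Conjugating the operator with weight `y ^ (1 - b)` by `y ^ b` gives the operator with weight
`y ^ (1 + b)`, up to the factor `y ^ b`. The latter is formally `y` times the Laplacian in
dimension `n + b + 2`, applied to functions that depend on the last `b + 2` variables only through
their norm `y`, and `(|x|² + y²) ^ (-(n + b) / 2)` is the fundamental solution in that dimension.
For `b = 2 * s`, multiplying it by `y ^ b` gives the Poisson kernel.
-/

section ExtensionOperator

open Module InnerProductSpace Laplacian Topology

variable {E : Type*} [NormedAddCommGroup E] [InnerProductSpace ℝ E]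

lemma hasFDerivAt_comp_norm_sq {f : ℝ → ℝ} {f' : ℝ} {x : E} (hf : HasDerivAt f f' (‖x‖ ^ 2)) :
    HasFDerivAt (fun z : E => f (‖z‖ ^ 2)) ((2 * f') • innerSL ℝ x) x := by
  convert! hf.comp_hasFDerivAt x (hasStrictFDerivAt_norm_sq x).hasFDerivAt using 1
  module

lemma fderiv_comp_norm_sq_eventuallyEq {f : ℝ → ℝ} {x : E}
    (hf : ∀ᶠ r in 𝓝 (‖x‖ ^ 2), DifferentiableAt ℝ f r) :
    fderiv ℝ (fun z : E => f (‖z‖ ^ 2)) =ᶠ[𝓝 x]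
      fun z => (2 * deriv f (‖z‖ ^ 2)) • innerSL ℝ z := by
  have hcont : ContinuousAt (fun z : E => ‖z‖ ^ 2) x := by fun_prop
  filter_upwards [hcont.eventually hf] with z hz
  exact (hasFDerivAt_comp_norm_sq hz.hasDerivAt).fderiv

lemma iteratedFDeriv_two_comp_norm_sq {f : ℝ → ℝ} {x : E} (hf : ContDiffAt ℝ 2 f (‖x‖ ^ 2))
    (v w : E) :
    iteratedFDeriv ℝ 2 (fun z : E => f (‖z‖ ^ 2)) x ![v, w] =
      2 * deriv f (‖x‖ ^ 2) * ⟪v, w⟫_ℝ +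
        4 * iteratedDeriv 2 f (‖x‖ ^ 2) * (⟪x, v⟫_ℝ * ⟪x, w⟫_ℝ) := by
  have hdiff : ∀ᶠ r in 𝓝 (‖x‖ ^ 2), DifferentiableAt ℝ f r :=
    (hf.eventually (by simp)).mono fun r hr => hr.differentiableAt two_ne_zero
  have hderiv : HasDerivAt (deriv f) (iteratedDeriv 2 f (‖x‖ ^ 2)) (‖x‖ ^ 2) := by
    rw [iteratedDeriv_succ, iteratedDeriv_one]
    exact ((hf.derivWithin one_add_one_eq_two.le).differentiableAt one_ne_zero).hasDerivAt
  have hsecond := ((hasFDerivAt_comp_norm_sq hderiv).const_mul 2).fun_smul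
    (innerSL ℝ (E := E)).hasFDerivAt
  have hinner (a b : E) : innerSL ℝ a b = ⟪a, b⟫_ℝ := innerSL_apply_apply ℝ a b
  rw [iteratedFDeriv_two_apply, (fderiv_comp_norm_sq_eventuallyEq hdiff).fderiv_eq, hsecond.fderiv]
  simp only [Matrix.cons_val_zero, Matrix.cons_val_one, Matrix.cons_val_fin_one, add_apply,
    smul_apply, ContinuousLinearMap.smulRight_apply, hinner, smul_eq_mul]
  ring

lemma iteratedDeriv_two_rpow_const (p r : ℝ) :
    iteratedDeriv 2 (fun t : ℝ => t ^ p) r = p * (p - 1) * r ^ (p - 2) := by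
  simp only [iteratedDeriv_succ, iteratedDeriv_zero, deriv_rpow_const', deriv_const_mul_field]
  ring_nf

variable [FiniteDimensional ℝ E]

theorem laplacian_comp_norm_sq {f : ℝ → ℝ} {x : E} (hf : ContDiffAt ℝ 2 f (‖x‖ ^ 2)) :
    Δ (fun z : E => f (‖z‖ ^ 2)) x =
      2 * finrank ℝ E * deriv f (‖x‖ ^ 2) + 4 * ‖x‖ ^ 2 * iteratedDeriv 2 f (‖x‖ ^ 2) := by
  simp only [laplacian_eq_iteratedFDeriv_stdOrthonormalBasis, iteratedFDeriv_two_comp_norm_sq hf,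
    ← sq, real_inner_self_eq_norm_sq, OrthonormalBasis.norm_eq_one]
  rw [Finset.sum_add_distrib, ← Finset.mul_sum, ← Finset.mul_sum,
    OrthonormalBasis.sum_sq_inner_left]
  simp only [one_pow, Finset.sum_const, Finset.card_univ, Fintype.card_fin, nsmul_eq_mul]
  ring

/-- The degenerate elliptic operator `y ^ (1 - α) * div (y ^ α ∇u)` of the Caffarelli–Silvestre
extension on `E × (0, ∞)`, in the expanded form that involves no real power of `y`. -/
noncomputable def weightedLaplacian (α : ℝ) (u : E → ℝ → ℝ) (x : E) (y : ℝ) : ℝ :=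
  y * Δ (fun z => u z y) x + α * deriv (u x) y + y * iteratedDeriv 2 (u x) y

lemma weightedLaplacian_comp_norm_sq_add_sq (α : ℝ) {f : ℝ → ℝ} {x : E} {y : ℝ}
    (hf : ContDiffAt ℝ 2 f (‖x‖ ^ 2 + y ^ 2)) :
    weightedLaplacian α (fun z t => f (‖z‖ ^ 2 + t ^ 2)) x y =
      2 * y * ((finrank ℝ E + 1 + α) * deriv f (‖x‖ ^ 2 + y ^ 2) +
        2 * (‖x‖ ^ 2 + y ^ 2) * iteratedDeriv 2 f (‖x‖ ^ 2 + y ^ 2)) := by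
  have hlaplacian : Δ (fun z : E => f (‖z‖ ^ 2 + y ^ 2)) x =
      2 * finrank ℝ E * deriv f (‖x‖ ^ 2 + y ^ 2) +
        4 * ‖x‖ ^ 2 * iteratedDeriv 2 f (‖x‖ ^ 2 + y ^ 2) := by
    rw [laplacian_comp_norm_sq (f := fun r => f (r + y ^ 2)) (by fun_prop), deriv_comp_add_const,
      iteratedDeriv_comp_add_const]
  have hderiv : deriv (fun t => f (‖x‖ ^ 2 + t ^ 2)) y = 2 * y * deriv f (‖x‖ ^ 2 + y ^ 2) := by
    have hsq : HasDerivAt (fun t : ℝ => ‖x‖ ^ 2 + t ^ 2) (2 * y) y := by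
      simpa using (hasDerivAt_pow 2 y).const_add (‖x‖ ^ 2)
    exact ((hf.differentiableAt two_ne_zero).hasDerivAt.comp y hsq).deriv.trans (mul_comm _ _)
  -- The second derivative in `t` is the Laplacian of a radial function on the space `ℝ`.
  have hderiv₂ : iteratedDeriv 2 (fun t => f (‖x‖ ^ 2 + t ^ 2)) y =
      2 * deriv f (‖x‖ ^ 2 + y ^ 2) + 4 * y ^ 2 * iteratedDeriv 2 f (‖x‖ ^ 2 + y ^ 2) := by
    have hradial := laplacian_comp_norm_sq (f := fun r => f (‖x‖ ^ 2 + r)) (x := y)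
      (by rw [norm_eq_abs, sq_abs]; fun_prop)
    simpa [laplacian_eq_iteratedDeriv_real, deriv_comp_const_add, iteratedDeriv_comp_const_add]
      using hradial
  rw [weightedLaplacian, hlaplacian, hderiv, hderiv₂]
  ring

lemma weightedLaplacian_norm_sq_add_sq_rpow (α p : ℝ) {x : E} {y : ℝ}
    (h : ‖x‖ ^ 2 + y ^ 2 ≠ 0) :
    weightedLaplacian α (fun z t => (‖z‖ ^ 2 + t ^ 2) ^ p) x y =
      2 * p * (finrank ℝ E - 1 + α + 2 * p) * y * (‖x‖ ^ 2 + y ^ 2) ^ (p - 1) := by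
  have hpow : (‖x‖ ^ 2 + y ^ 2) ^ (p - 1) =
      (‖x‖ ^ 2 + y ^ 2) ^ (p - 2) * (‖x‖ ^ 2 + y ^ 2) := by
    rw [← rpow_add_one h]
    ring_nf
  rw [weightedLaplacian_comp_norm_sq_add_sq (f := fun r => r ^ p) α (contDiffAt_rpow_const_of_ne h),
    Real.deriv_rpow_const, iteratedDeriv_two_rpow_const, hpow]
  ring

lemma weightedLaplacian_rpow_mul (b : ℝ) {u : E → ℝ → ℝ} {x : E} {y : ℝ} (hy : y ≠ 0)
    (hux : ContDiffAt ℝ 2 (fun z => u z y) x) (huy : ContDiffAt ℝ 2 (u x) y) :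
    weightedLaplacian (1 - b) (fun z t => t ^ b * u z t) x y =
      y ^ b * weightedLaplacian (1 + b) u x y := by
  have hrpow : ContDiffAt ℝ 2 (fun t : ℝ => t ^ b) y := contDiffAt_rpow_const_of_ne hy
  have hlaplacian : Δ (fun z => y ^ b * u z y) x = y ^ b * Δ (fun z => u z y) x :=
    laplacian_smul (y ^ b) hux
  have hderiv : deriv (fun t => t ^ b * u x t) y =
      b * y ^ (b - 1) * u x y + y ^ b * deriv (u x) y := by
    rw [deriv_fun_mul (hrpow.differentiableAt two_ne_zero) (huy.differentiableAt two_ne_zero),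
      Real.deriv_rpow_const]
  have hderiv₂ : iteratedDeriv 2 (fun t => t ^ b * u x t) y =
      b * (b - 1) * y ^ (b - 2) * u x y + 2 * b * y ^ (b - 1) * deriv (u x) y +
        y ^ b * iteratedDeriv 2 (u x) y := by
    rw [iteratedDeriv_fun_mul hrpow huy]
    simp only [Nat.reduceAdd, Finset.sum_range_succ, Finset.range_one, Finset.sum_singleton,
      Nat.choose_zero_right, Nat.cast_one, iteratedDeriv_zero, one_mul, tsub_zero,
      Nat.choose_succ_self_right, Nat.cast_ofNat, iteratedDeriv_one, Real.deriv_rpow_const,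
      Nat.add_one_sub_one, Nat.choose_self, iteratedDeriv_two_rpow_const, tsub_self]
    ring
  have hpow₁ : y ^ (b - 1) = y ^ (b - 2) * y := by
    rw [← rpow_add_one hy]
    ring_nf
  have hpow₂ : y ^ b = y ^ (b - 2) * y ^ 2 := by
    rw [← rpow_add_natCast hy, Nat.cast_ofNat, sub_add_cancel]
  rw [weightedLaplacian, weightedLaplacian, hlaplacian, hderiv, hderiv₂, hpow₁, hpow₂]
  ring

theorem stmt11_general (s : ℝ) (P : E → ℝ → ℝ)
    (hP : ∀ (x : E) (y : ℝ),
      P x y = y ^ (2 * s) * (‖x‖ ^ 2 + y ^ 2) ^ (-((finrank ℝ E : ℝ) + 2 * s) / 2))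
    (x : E) (y : ℝ) (hy : 0 < y) :
    weightedLaplacian (1 - 2 * s) P x y = 0 := by
  obtain rfl : P = _ := funext₂ hP
  have hQ : ‖x‖ ^ 2 + y ^ 2 ≠ 0 := by positivity
  rw [weightedLaplacian_rpow_mul (2 * s) hy.ne', weightedLaplacian_norm_sq_add_sq_rpow _ _ hQ]
  · ring
  · exact ((contDiff_norm_sq ℝ).contDiffAt.add contDiffAt_const).rpow_const_of_ne hQ
  · exact ContDiffAt.rpow_const_of_ne (by fun_prop) hQ

end ExtensionOperator

/-- The Caffarelli–Silvestre Poisson kernel `P(x,y) = y^{2s}(|x|²+y²)^{-(n+2s)/2}`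
satisfies `y·Δₓ P + (1-2s)·∂_y P + y·∂²_{yy} P = 0` on `ℝⁿ × (0,∞)`, i.e.
`div(y^{1-2s} ∇P) = 0` there. -/
theorem stmt11 {n : ℕ} (hn : 1 ≤ n) (s : ℝ) (hs : s ∈ Set.Ioo (0 : ℝ) 1)
    (P : EuclideanSpace ℝ (Fin n) → ℝ → ℝ)
    (hP : ∀ (x : EuclideanSpace ℝ (Fin n)) (y : ℝ),
      P x y = y ^ (2 * s) * (‖x‖ ^ 2 + y ^ 2) ^ (-((n : ℝ) + 2 * s) / 2))
    (x : EuclideanSpace ℝ (Fin n)) (y : ℝ) (hy : 0 < y) :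
    y * (∑ i : Fin n,
        iteratedFDeriv ℝ 2 (fun x' => P x' y) x
          ![EuclideanSpace.basisFun (Fin n) ℝ i, EuclideanSpace.basisFun (Fin n) ℝ i])
      + (1 - 2 * s) * deriv (fun t => P x t) y
      + y * deriv (deriv (fun t => P x t)) y = 0 := by
  simpa only [weightedLaplacian, iteratedDeriv_succ, iteratedDeriv_zero,
    InnerProductSpace.laplacian_eq_iteratedFDeriv_orthonormalBasis _
      (EuclideanSpace.basisFun (Fin n) ℝ)]
    using stmt11_general s P (by simpa only [finrank_euclideanSpace_fin] using hP) x y hy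
end

section
/- Let n ≥ 1 and s ∈ (0,1). Let u : ℝⁿ → ℝ be continuous with compact support, and let w_u(x,y) = ∫_{ℝⁿ} y^{2s} u(ξ) (|x-ξ|² + y²)^{-(n+2s)/2} dξ for x ∈ ℝⁿ, y > 0. Then w_u is smooth on ℝⁿ × (0,∞) and satisfies Δ_x w_u + ((1-2s)/y) ∂_y w_u + ∂²_{yy} w_u = 0 there; equivalently, div(y^{1-2s} ∇w_u) = 0 on the half-space ℝⁿ × (0,∞). -/
open MeasureTheory Real Filter
open scoped ENNReal

open Set Function InnerProductSpace Laplacian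
open scoped Topology ContDiff

/-! Since `u` is integrable with compact support and the kernel is smooth for `0 < y`, one may
differentiate under the integral sign: the extension is smooth, and the differential operator
passes onto the kernel. On functions of the form `y ^ (2s) (‖z‖² + y²) ^ a` the singular terms
`y ^ (2s - 2)` of the operator cancel, and what is left is
`2a (n + 2s + 2a) y ^ (2s) (‖z‖² + y²) ^ (a - 1)`; the exponent `a = -(n + 2s) / 2` of the Poisson
kernel is the one that makes this vanish. -/

section ParametricIntegral

theorem continuous_of_continuousOn_prod_univ {Y Z W : Type*} [TopologicalSpace Y]
    [TopologicalSpace Z] [TopologicalSpace W] {V : Set Y} {k : Y → Z → W}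
    (hk : ContinuousOn ↿k (V ×ˢ univ)) {p : Y} (hp : p ∈ V) : Continuous (k p) :=
  hk.comp_continuous (Continuous.prodMk_right p) fun _ => ⟨hp, mem_univ _⟩

theorem integrable_smul_of_continuous {X F : Type*} [TopologicalSpace X] [T2Space X]
    [SecondCountableTopology X] [MeasurableSpace X] [OpensMeasurableSpace X]
    [NormedAddCommGroup F] [NormedSpace ℝ F] {μ : Measure X} {u : X → ℝ} {f : X → F}
    (hu : Integrable u μ) (hsupp : HasCompactSupport u) (hf : Continuous f) :
    Integrable (fun ξ => u ξ • f ξ) μ :=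
  (hu.integrableOn.smul_continuousOn hf.continuousOn
    hsupp.isCompact).integrable_of_forall_notMem_eq_zero fun ξ hξ => by
      rw [image_eq_zero_of_notMem_tsupport hξ, zero_smul]

variable {P X F : Type*} [NormedAddCommGroup P] [NormedSpace ℝ P] [NormedAddCommGroup X]
  [NormedSpace ℝ X] [NormedAddCommGroup F] [NormedSpace ℝ F] {U : Set P} {k : P → X → F} {p : P}

theorem contDiffOn_fderiv_param {m n : WithTop ℕ∞} (hU : IsOpen U)
    (hk : ContDiffOn ℝ n ↿k (U ×ˢ univ)) (hmn : m + 1 ≤ n) :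
    ContDiffOn ℝ m ↿(fun p ξ => fderiv ℝ (k · ξ) p) (U ×ˢ univ) := by
  intro q hq
  have hkq : ContDiffAt ℝ n ↿k q := hk.contDiffAt ((hU.prod isOpen_univ).mem_nhds hq)
  have hkq' : ContDiffAt ℝ n (uncurry fun (r : P × X) (p : P) => k p r.2) (q, q.1) :=
    hkq.comp (q, q.1) (f := fun r : (P × X) × P => (r.2, r.1.2)) (by fun_prop)
  exact (hkq'.fderiv contDiffAt_fst hmn).contDiffWithinAt

variable [SecondCountableTopology X] [MeasurableSpace X] [OpensMeasurableSpace X]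
  {μ : Measure X} {u : X → ℝ}

theorem integrable_smul_fderiv (hu : Integrable u μ) (hsupp : HasCompactSupport u)
    (hU : IsOpen U) (hk : ContDiffOn ℝ 1 ↿k (U ×ˢ univ)) (hp : p ∈ U) :
    Integrable (fun ξ => u ξ • fderiv ℝ (k · ξ) p) μ :=
  integrable_smul_of_continuous hu hsupp <| continuous_of_continuousOn_prod_univ
    (contDiffOn_fderiv_param (m := 0) hU hk (by norm_num)).continuousOn hp

set_option maxSynthPendingDepth 3 in
theorem integrable_smul_fderiv_fderiv (hu : Integrable u μ) (hsupp : HasCompactSupport u)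
    (hU : IsOpen U) (hk : ContDiffOn ℝ 2 ↿k (U ×ˢ univ)) (hp : p ∈ U) :
    Integrable (fun ξ => u ξ • fderiv ℝ (fderiv ℝ (k · ξ)) p) μ :=
  integrable_smul_fderiv hu hsupp hU
    (contDiffOn_fderiv_param hU hk (by norm_num [one_add_one_eq_two])) hp

variable [FiniteDimensional ℝ P]

theorem hasFDerivAt_integral_smul (hu : Integrable u μ) (hsupp : HasCompactSupport u)
    (hU : IsOpen U) (hk : ContDiffOn ℝ 1 ↿k (U ×ˢ univ)) (hp : p ∈ U) :
    HasFDerivAt (fun p => ∫ ξ, u ξ • k p ξ ∂μ) (∫ ξ, u ξ • fderiv ℝ (k · ξ) p ∂μ) p := by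
  have hk' : ContinuousOn ↿(fun p ξ => fderiv ℝ (k · ξ) p) (U ×ˢ univ) :=
    (contDiffOn_fderiv_param (m := 0) hU hk (by norm_num)).continuousOn
  have hdiff : ∀ q ∈ U, ∀ ξ, DifferentiableAt ℝ (k · ξ) q := fun q hq ξ =>
    ((hk.differentiableOn one_ne_zero).differentiableAt
      ((hU.prod isOpen_univ).mem_nhds ⟨hq, mem_univ ξ⟩)).comp q
        (f := fun q => (q, ξ)) (by fun_prop)
  have hint : ∀ q ∈ U, Integrable (fun ξ => u ξ • k q ξ) μ := fun q hq =>
    integrable_smul_of_continuous hu hsupp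
      (continuous_of_continuousOn_prod_univ hk.continuousOn hq)
  obtain ⟨ε, hε, hball⟩ := Metric.nhds_basis_closedBall.mem_iff.1 (hU.mem_nhds hp)
  obtain ⟨C, hC⟩ := ((isCompact_closedBall p ε).prod hsupp.isCompact).exists_bound_of_continuousOn
    (hk'.mono (prod_mono hball (subset_univ _)))
  have hbound : ∀ ξ, ∀ q ∈ Metric.closedBall p ε,
      ‖u ξ • fderiv ℝ (k · ξ) q‖ ≤ ‖u ξ‖ * C := fun ξ q hq => by
    by_cases hξ : ξ ∈ tsupport u
    · rw [norm_smul]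
      exact mul_le_mul_of_nonneg_left (hC (q, ξ) ⟨hq, hξ⟩) (norm_nonneg _)
    · simp [image_eq_zero_of_notMem_tsupport hξ]
  exact hasFDerivAt_integral_of_dominated_of_fderiv_le (Metric.closedBall_mem_nhds p hε)
    (eventually_of_mem (hU.mem_nhds hp) fun q hq => (hint q hq).aestronglyMeasurable)
    (hint p hp)
    (integrable_smul_of_continuous hu hsupp
      (continuous_of_continuousOn_prod_univ hk' hp)).aestronglyMeasurable
    (ae_of_all _ hbound) (hu.norm.mul_const C)
    (ae_of_all _ fun ξ q hq => (hdiff q (hball hq) ξ).hasFDerivAt.const_smul (u ξ))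

theorem contDiffOn_integral_smul (hu : Integrable u μ) (hsupp : HasCompactSupport u)
    (hU : IsOpen U) (hk : ContDiffOn ℝ ∞ ↿k (U ×ˢ univ)) :
    ContDiffOn ℝ ∞ (fun p => ∫ ξ, u ξ • k p ξ ∂μ) U := by
  refine contDiffOn_infty.2 fun n => ?_
  induction n generalizing k with
  | zero =>
    refine contDiffOn_zero.2 fun p hp => ?_
    exact (hasFDerivAt_integral_smul hu hsupp hU (hk.of_le (mod_cast le_top))
      hp).continuousAt.continuousWithinAt
  | succ n ih =>
    have hk₁ : ContDiffOn ℝ 1 ↿k (U ×ˢ univ) := hk.of_le (mod_cast le_top)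
    have hderiv := fun p (hp : p ∈ U) => hasFDerivAt_integral_smul hu hsupp hU hk₁ hp
    rw [Nat.cast_succ, contDiffOn_succ_iff_fderiv_of_isOpen hU]
    refine ⟨fun p hp => (hderiv p hp).differentiableAt.differentiableWithinAt, by simp, ?_⟩
    -- Applying the derivative to a fixed vector keeps the values in `F`, as the induction needs.
    refine contDiffOn_clm_apply.2 fun v => ?_
    have hkv : ContDiffOn ℝ ∞ ↿(fun p ξ => fderiv ℝ (k · ξ) p v) (U ×ˢ univ) :=
      (contDiffOn_fderiv_param hU hk le_rfl).clm_apply contDiffOn_const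
    refine (ih hkv).congr fun p hp => ?_
    rw [(hderiv p hp).fderiv,
      ContinuousLinearMap.integral_apply (integrable_smul_fderiv hu hsupp hU hk₁ hp)]
    rfl

theorem fderiv_fderiv_integral_smul (hu : Integrable u μ) (hsupp : HasCompactSupport u)
    (hU : IsOpen U) (hk : ContDiffOn ℝ 2 ↿k (U ×ˢ univ)) (hp : p ∈ U) :
    fderiv ℝ (fderiv ℝ fun p => ∫ ξ, u ξ • k p ξ ∂μ) p =
      ∫ ξ, u ξ • fderiv ℝ (fderiv ℝ (k · ξ)) p ∂μ := by
  have hfderiv : fderiv ℝ (fun p => ∫ ξ, u ξ • k p ξ ∂μ) =ᶠ[𝓝 p]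
      fun p => ∫ ξ, u ξ • fderiv ℝ (k · ξ) p ∂μ :=
    eventually_of_mem (hU.mem_nhds hp) fun q hq =>
      (hasFDerivAt_integral_smul hu hsupp hU (hk.of_le one_le_two) hq).fderiv
  rw [hfderiv.fderiv_eq]
  exact (hasFDerivAt_integral_smul hu hsupp hU
    (contDiffOn_fderiv_param hU hk (by norm_num [one_add_one_eq_two])) hp).fderiv

theorem integrable_smul_deriv {V : Set ℝ} {g : ℝ → X → F} {y : ℝ} (hu : Integrable u μ)
    (hsupp : HasCompactSupport u) (hV : IsOpen V) (hg : ContDiffOn ℝ 1 ↿g (V ×ˢ univ))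
    (hy : y ∈ V) : Integrable (fun ξ => u ξ • deriv (g · ξ) y) μ :=
  (integrable_smul_fderiv hu hsupp hV hg hy).apply_continuousLinearMap 1

theorem deriv_integral_smul {V : Set ℝ} {g : ℝ → X → F} {y : ℝ} (hu : Integrable u μ)
    (hsupp : HasCompactSupport u) (hV : IsOpen V) (hg : ContDiffOn ℝ 1 ↿g (V ×ˢ univ))
    (hy : y ∈ V) : deriv (fun y => ∫ ξ, u ξ • g y ξ ∂μ) y = ∫ ξ, u ξ • deriv (g · ξ) y ∂μ := by
  rw [← fderiv_apply_one_eq_deriv, (hasFDerivAt_integral_smul hu hsupp hV hg hy).fderiv,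
    ContinuousLinearMap.integral_apply (integrable_smul_fderiv hu hsupp hV hg hy)]
  rfl

end ParametricIntegral

section Laplacian

variable {E X F : Type*} [NormedAddCommGroup E] [InnerProductSpace ℝ E] [FiniteDimensional ℝ E]
  [NormedAddCommGroup X] [NormedSpace ℝ X] [SecondCountableTopology X] [MeasurableSpace X]
  [OpensMeasurableSpace X] [NormedAddCommGroup F] [NormedSpace ℝ F]
  {μ : Measure X} {u : X → ℝ} {U : Set E} {k : E → X → F} {x : E}

theorem laplacian_eq_sum_fderiv_fderiv {ι : Type*} [Fintype ι] (b : OrthonormalBasis ι ℝ E)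
    (f : E → F) (x : E) : Δ f x = ∑ i, fderiv ℝ (fderiv ℝ f) x (b i) (b i) := by
  simp [laplacian_eq_iteratedFDeriv_orthonormalBasis f b, iteratedFDeriv_two_apply]

theorem laplacian_comp_sub_right (f : E → F) (a x : E) :
    Δ (fun x => f (x - a)) x = Δ f (x - a) := by
  simp [laplacian_eq_iteratedFDeriv_stdOrthonormalBasis, iteratedFDeriv_comp_sub]

theorem deriv_deriv_eq_laplacian (f : ℝ → F) (y : ℝ) : deriv (deriv f) y = Δ f y := by
  simp [iteratedDeriv_succ]

theorem integrable_smul_laplacian (hu : Integrable u μ) (hsupp : HasCompactSupport u)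
    (hU : IsOpen U) (hk : ContDiffOn ℝ 2 ↿k (U ×ˢ univ)) (hx : x ∈ U) :
    Integrable (fun ξ => u ξ • Δ (k · ξ) x) μ := by
  have hD := integrable_smul_fderiv_fderiv hu hsupp hU hk hx
  simp only [laplacian_eq_sum_fderiv_fderiv (stdOrthonormalBasis ℝ E), Finset.smul_sum]
  exact integrable_finsetSum _ fun i _ =>
    (hD.apply_continuousLinearMap _).apply_continuousLinearMap _

theorem laplacian_integral_smul (hu : Integrable u μ) (hsupp : HasCompactSupport u)
    (hU : IsOpen U) (hk : ContDiffOn ℝ 2 ↿k (U ×ˢ univ)) (hx : x ∈ U) :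
    Δ (fun x => ∫ ξ, u ξ • k x ξ ∂μ) x = ∫ ξ, u ξ • Δ (k · ξ) x ∂μ := by
  have hD := integrable_smul_fderiv_fderiv hu hsupp hU hk hx
  have hDv := fun v => hD.apply_continuousLinearMap v
  simp only [laplacian_eq_sum_fderiv_fderiv (stdOrthonormalBasis ℝ E), Finset.smul_sum]
  refine Eq.trans ?_ (integral_finsetSum _ fun i _ => (hDv _).apply_continuousLinearMap _).symm
  refine Finset.sum_congr rfl fun i _ => ?_
  rw [fderiv_fderiv_integral_smul hu hsupp hU hk hx, ContinuousLinearMap.integral_apply hD,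
    ContinuousLinearMap.integral_apply (hDv _)]

end Laplacian

section ExtensionOperator

variable {E : Type*} [NormedAddCommGroup E] [InnerProductSpace ℝ E] [FiniteDimensional ℝ E]

/-- The degenerate elliptic operator `Δₓ w + ((1 - 2s) / y) ∂_y w + ∂²_{yy} w` of the
Caffarelli–Silvestre extension, equal to `y ^ (2s - 1) div (y ^ (1 - 2s) ∇w)` for `0 < y`. -/
noncomputable def extensionOperator (s : ℝ) (w : E → ℝ → ℝ) (x : E) (y : ℝ) : ℝ :=
  Δ (w · y) x + (1 - 2 * s) / y * deriv (w x) y + deriv (deriv (w x)) y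

theorem extensionOperator_comp_sub_right (s : ℝ) (w : E → ℝ → ℝ) (a x : E) (y : ℝ) :
    extensionOperator s (fun x y => w (x - a) y) x y = extensionOperator s w (x - a) y := by
  simp only [extensionOperator, laplacian_comp_sub_right (w · y)]

variable {X : Type*} [NormedAddCommGroup X] [NormedSpace ℝ X] [SecondCountableTopology X]
  [MeasurableSpace X] [OpensMeasurableSpace X] {μ : Measure X} {u : X → ℝ}

theorem extensionOperator_integral_smul (s : ℝ) {k : E → ℝ → X → ℝ} (hu : Integrable u μ)
    (hsupp : HasCompactSupport u)
    (hk : ContDiffOn ℝ 2 (fun q : (E × ℝ) × X => k q.1.1 q.1.2 q.2) ({p | 0 < p.2} ×ˢ univ))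
    (x : E) {y : ℝ} (hy : 0 < y) :
    extensionOperator s (fun x y => ∫ ξ, u ξ • k x y ξ ∂μ) x y =
      ∫ ξ, u ξ • extensionOperator s (k · · ξ) x y ∂μ := by
  have hkx : ContDiffOn ℝ 2 ↿(fun x ξ => k x y ξ) (univ ×ˢ univ) :=
    hk.comp (f := fun q : E × X => ((q.1, y), q.2)) (by fun_prop) fun _ _ => ⟨hy, mem_univ _⟩
  have hky : ContDiffOn ℝ 2 ↿(k x) (Ioi 0 ×ˢ univ) :=
    hk.comp (f := fun q : ℝ × X => ((x, q.1), q.2)) (by fun_prop) fun _ hq => hq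
  have hky₁ : ContDiffOn ℝ 1 ↿(k x) (Ioi 0 ×ˢ univ) := hky.of_le one_le_two
  have hint_x := integrable_smul_laplacian hu hsupp isOpen_univ hkx (mem_univ x)
  have hint_y := (integrable_smul_deriv hu hsupp isOpen_Ioi hky₁ hy).const_mul ((1 - 2 * s) / y)
  have hint_yy := integrable_smul_laplacian hu hsupp isOpen_Ioi hky hy
  simp only [extensionOperator, deriv_deriv_eq_laplacian, smul_add, ← mul_smul_comm]
  rw [laplacian_integral_smul hu hsupp isOpen_univ hkx (mem_univ x),
    deriv_integral_smul hu hsupp isOpen_Ioi hky₁ hy,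
    laplacian_integral_smul hu hsupp isOpen_Ioi hky hy, ← integral_const_mul,
    ← integral_add hint_x hint_y, ← integral_add (hint_x.fun_add hint_y) hint_yy]

end ExtensionOperator

section ExtensionKernel

variable {E : Type*} [NormedAddCommGroup E] [InnerProductSpace ℝ E]

theorem hasFDerivAt_norm_sq_add_rpow {c : ℝ} (hc : 0 < c) (a : ℝ) (x : E) :
    HasFDerivAt (fun x : E => (‖x‖ ^ 2 + c) ^ a)
      ((2 * a * (‖x‖ ^ 2 + c) ^ (a - 1)) • innerSL ℝ x) x := by
  have hpos : 0 < ‖x‖ ^ 2 + c := by positivity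
  refine (((hasStrictFDerivAt_norm_sq x).hasFDerivAt.add_const c).rpow_const
    (Or.inl hpos.ne')).congr_fderiv ?_
  module

theorem fderiv_fderiv_norm_sq_add_rpow_apply {c : ℝ} (hc : 0 < c) (a : ℝ) (x v : E) :
    fderiv ℝ (fderiv ℝ fun x : E => (‖x‖ ^ 2 + c) ^ a) x v v =
      2 * a * (‖x‖ ^ 2 + c) ^ (a - 1) * ‖v‖ ^ 2 +
        4 * a * (a - 1) * (‖x‖ ^ 2 + c) ^ (a - 2) * ⟪x, v⟫_ℝ ^ 2 := by
  have hfderiv : fderiv ℝ (fun x : E => (‖x‖ ^ 2 + c) ^ a) =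
      fun x => (2 * a * (‖x‖ ^ 2 + c) ^ (a - 1)) • innerSL ℝ x :=
    funext fun x => (hasFDerivAt_norm_sq_add_rpow hc a x).fderiv
  have h := ((hasFDerivAt_norm_sq_add_rpow hc (a - 1) x).const_mul (2 * a)).fun_smul
    (innerSL ℝ (E := E)).hasFDerivAt
  have hinner : ∀ w : E, innerSL ℝ w v = ⟪w, v⟫_ℝ := fun _ => rfl
  rw [hfderiv, h.fderiv]
  simp only [add_apply, smul_apply, ContinuousLinearMap.smulRight_apply, hinner, smul_eq_mul,
    real_inner_self_eq_norm_sq]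
  ring_nf

theorem laplacian_norm_sq_add_rpow [FiniteDimensional ℝ E] {c : ℝ} (hc : 0 < c) (a : ℝ) (x : E) :
    Δ (fun x : E => (‖x‖ ^ 2 + c) ^ a) x =
      2 * a * Module.finrank ℝ E * (‖x‖ ^ 2 + c) ^ (a - 1) +
        4 * a * (a - 1) * ‖x‖ ^ 2 * (‖x‖ ^ 2 + c) ^ (a - 2) := by
  simp only [laplacian_eq_sum_fderiv_fderiv (stdOrthonormalBasis ℝ E),
    fderiv_fderiv_norm_sq_add_rpow_apply hc, OrthonormalBasis.norm_eq_one,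
    Finset.sum_add_distrib, ← Finset.mul_sum, OrthonormalBasis.sum_sq_inner_left,
    one_pow, Finset.sum_const, Finset.card_univ, Fintype.card_fin, nsmul_eq_mul, mul_one]
  ring

theorem hasDerivAt_rpow_mul_add_sq_rpow {ρ y : ℝ} (hρ : 0 ≤ ρ) (hy : 0 < y) (b a : ℝ) :
    HasDerivAt (fun t => t ^ b * (ρ + t ^ 2) ^ a)
      (b * (y ^ (b - 1) * (ρ + y ^ 2) ^ a) +
        2 * a * (y ^ (b + 1) * (ρ + y ^ 2) ^ (a - 1))) y := by
  have hsq : HasDerivAt (fun t => ρ + t ^ 2) (2 * y) y := by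
    simpa using (hasDerivAt_pow 2 y).const_add ρ
  refine ((hasDerivAt_rpow_const (p := b) (Or.inl hy.ne')).mul
    (hsq.rpow_const (p := a) (Or.inl (by positivity)))).congr_deriv ?_
  rw [rpow_add_one hy.ne']
  ring

theorem deriv_deriv_rpow_mul_add_sq_rpow {ρ y : ℝ} (hρ : 0 ≤ ρ) (hy : 0 < y) (b a : ℝ) :
    deriv (deriv fun t => t ^ b * (ρ + t ^ 2) ^ a) y =
      b * (b - 1) * (y ^ (b - 2) * (ρ + y ^ 2) ^ a) +
        2 * a * (2 * b + 1) * (y ^ b * (ρ + y ^ 2) ^ (a - 1)) +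
        4 * a * (a - 1) * (y ^ (b + 2) * (ρ + y ^ 2) ^ (a - 2)) := by
  have hderiv : deriv (fun t => t ^ b * (ρ + t ^ 2) ^ a) =ᶠ[𝓝 y] fun t =>
      b * (t ^ (b - 1) * (ρ + t ^ 2) ^ a) + 2 * a * (t ^ (b + 1) * (ρ + t ^ 2) ^ (a - 1)) :=
    eventually_of_mem (Ioi_mem_nhds hy) fun t ht =>
      (hasDerivAt_rpow_mul_add_sq_rpow hρ ht b a).deriv
  have h := ((hasDerivAt_rpow_mul_add_sq_rpow hρ hy (b - 1) a).const_mul b).fun_add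
    ((hasDerivAt_rpow_mul_add_sq_rpow hρ hy (b + 1) (a - 1)).const_mul (2 * a))
  rw [hderiv.deriv_eq, h.deriv]
  ring_nf

/-- The Poisson kernel `P_s(z, y) = y ^ (2s) (‖z‖² + y²) ^ (-(n + 2s) / 2)` of the
Caffarelli–Silvestre extension, with `n = dim E` and without a normalizing constant. -/
noncomputable def extensionKernel (s : ℝ) (z : E) (y : ℝ) : ℝ :=
  y ^ (2 * s) * (‖z‖ ^ 2 + y ^ 2) ^ (-(Module.finrank ℝ E + 2 * s) / 2)

theorem contDiffOn_extensionKernel (s : ℝ) {n : WithTop ℕ∞} :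
    ContDiffOn ℝ n (fun q : E × ℝ => extensionKernel s q.1 q.2) {q | 0 < q.2} := by
  refine (contDiffOn_snd.rpow_const_of_ne fun q hq => ne_of_gt hq).mul
    (ContDiffOn.rpow_const_of_ne ?_ fun q (hq : 0 < q.2) => by positivity)
  exact ((contDiff_fst.norm_sq ℝ).add (contDiff_snd.pow 2)).contDiffOn

theorem contDiffOn_extensionKernel_sub (s : ℝ) {n : WithTop ℕ∞} :
    ContDiffOn ℝ n (fun q : (E × ℝ) × E => extensionKernel s (q.1.1 - q.2) q.1.2)
      ({p | 0 < p.2} ×ˢ univ) :=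
  (contDiffOn_extensionKernel s).comp (f := fun q : (E × ℝ) × E => (q.1.1 - q.2, q.1.2))
    (by fun_prop) fun _ hq => hq.1

theorem extensionOperator_rpow_mul_norm_sq_add_sq_rpow [FiniteDimensional ℝ E] (s a : ℝ) (z : E)
    {y : ℝ} (hy : 0 < y) :
    extensionOperator s (fun z y => y ^ (2 * s) * (‖z‖ ^ 2 + y ^ 2) ^ a) z y =
      2 * a * (Module.finrank ℝ E + 2 * s + 2 * a) *
        (y ^ (2 * s) * (‖z‖ ^ 2 + y ^ 2) ^ (a - 1)) := by
  have hR : 0 < ‖z‖ ^ 2 + y ^ 2 := by positivity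
  have hsmooth : ContDiffAt ℝ 2 (fun z : E => (‖z‖ ^ 2 + y ^ 2) ^ a) z :=
    ((contDiff_norm_sq ℝ).add contDiff_const).contDiffAt.rpow_const_of_ne hR.ne'
  have hlaplacian : Δ (fun z : E => y ^ (2 * s) * (‖z‖ ^ 2 + y ^ 2) ^ a) z =
      y ^ (2 * s) * Δ (fun z : E => (‖z‖ ^ 2 + y ^ 2) ^ a) z :=
    laplacian_smul (y ^ (2 * s)) hsmooth
  rw [extensionOperator, hlaplacian, laplacian_norm_sq_add_rpow (pow_pos hy 2),
    (hasDerivAt_rpow_mul_add_sq_rpow (sq_nonneg _) hy _ _).deriv,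
    deriv_deriv_rpow_mul_add_sq_rpow (sq_nonneg _) hy]
  simp only [rpow_sub_one hy.ne', rpow_add_one hy.ne', rpow_sub_one hR.ne', rpow_sub hy,
    rpow_add hy, rpow_sub hR, rpow_two]
  field_simp
  ring

theorem extensionOperator_extensionKernel [FiniteDimensional ℝ E] (s : ℝ) (z : E) {y : ℝ}
    (hy : 0 < y) : extensionOperator s (extensionKernel s) z y = 0 := by
  refine (extensionOperator_rpow_mul_norm_sq_add_sq_rpow s _ z hy).trans ?_
  ring

end ExtensionKernel

section PoissonExtension

variable {E : Type*} [NormedAddCommGroup E] [InnerProductSpace ℝ E] [FiniteDimensional ℝ E]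
  [MeasurableSpace E]

/-- The extension `w(x, y) = ∫ u(ξ) P_s(x - ξ, y) dμ(ξ)` of the function `u` to `E × (0, ∞)`; the
reference measure `μ` is arbitrary. -/
noncomputable def poissonExtension (s : ℝ) (μ : Measure E) (u : E → ℝ) (x : E) (y : ℝ) : ℝ :=
  ∫ ξ, u ξ • extensionKernel s (x - ξ) y ∂μ

theorem stmt12_general [OpensMeasurableSpace E] (s : ℝ) {μ : Measure E} {u : E → ℝ}
    (hu : Integrable u μ) (hsupp : HasCompactSupport u) :
    ContDiffOn ℝ ∞ (fun p : E × ℝ => poissonExtension s μ u p.1 p.2) {p | 0 < p.2} ∧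
      ∀ (x : E) (y : ℝ), 0 < y → extensionOperator s (poissonExtension s μ u) x y = 0 := by
  refine ⟨contDiffOn_integral_smul hu hsupp (isOpen_lt continuous_const continuous_snd)
    (contDiffOn_extensionKernel_sub s), fun x y hy => ?_⟩
  calc extensionOperator s (poissonExtension s μ u) x y
      = ∫ ξ, u ξ • extensionOperator s (fun x y => extensionKernel s (x - ξ) y) x y ∂μ :=
        extensionOperator_integral_smul s hu hsupp (contDiffOn_extensionKernel_sub s) x hy
    _ = 0 := by
        simp only [extensionOperator_comp_sub_right, extensionOperator_extensionKernel s _ hy,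
          smul_zero, integral_zero]

end PoissonExtension

/-- For `s ∈ (0,1)` and continuous compactly supported `u`, the Caffarelli–Silvestre
extension `w_u(x,y) = ∫ y^{2s} u(ξ)(|x-ξ|²+y²)^{-(n+2s)/2} dξ` is smooth on
`ℝⁿ × (0,∞)` and satisfies `Δₓ w + ((1-2s)/y) ∂_y w + ∂²_{yy} w = 0` there,
i.e. `div(y^{1-2s}∇w) = 0` on the half-space. -/
theorem stmt12 {n : ℕ} (hn : 1 ≤ n) (s : ℝ) (hs : s ∈ Set.Ioo (0 : ℝ) 1)
    (u : EuclideanSpace ℝ (Fin n) → ℝ) (hcont : Continuous u)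
    (hsupp : HasCompactSupport u)
    (w : EuclideanSpace ℝ (Fin n) → ℝ → ℝ)
    (hw : ∀ (x : EuclideanSpace ℝ (Fin n)) (y : ℝ),
      w x y = ∫ ξ : EuclideanSpace ℝ (Fin n),
        y ^ (2 * s) * u ξ * (‖x - ξ‖ ^ 2 + y ^ 2) ^ (-((n : ℝ) + 2 * s) / 2)) :
    ContDiffOn ℝ (⊤ : ℕ∞) (fun p : EuclideanSpace ℝ (Fin n) × ℝ => w p.1 p.2)
      {p : EuclideanSpace ℝ (Fin n) × ℝ | 0 < p.2} ∧
    ∀ (x : EuclideanSpace ℝ (Fin n)) (y : ℝ), 0 < y →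
      (∑ i : Fin n,
          iteratedFDeriv ℝ 2 (fun x' => w x' y) x
            ![EuclideanSpace.basisFun (Fin n) ℝ i, EuclideanSpace.basisFun (Fin n) ℝ i])
        + ((1 - 2 * s) / y) * deriv (fun t => w x t) y
        + deriv (deriv (fun t => w x t)) y = 0 := by
  obtain rfl : w = poissonExtension s volume u := by
    ext x y
    simp only [hw, poissonExtension, extensionKernel, finrank_euclideanSpace_fin, smul_eq_mul,
      mul_assoc, mul_left_comm]
  simpa only [extensionOperator, laplacian_eq_iteratedFDeriv_orthonormalBasis _
    (EuclideanSpace.basisFun (Fin n) ℝ)] using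
    stmt12_general s (hcont.integrable_of_hasCompactSupport hsupp) hsupp
end
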